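/- Let Z : LC(ℝ) → ℝ be a simple, τ-upper semicontinuous, translation invariant and dually epi-translation invariant valuation that vanishes on indicator functions of closed intervals. Then Z(u) ≥ 0 for every u ∈ LC(ℝ). -/

import Mathlib

open MeasureTheory Filter Topology Pointwise Asymptotics

noncomputable section

variable {E : Type*} [NormedAddCommGroup E] [NormedSpace ℝ E]

/-- The effective domain of an extended-real-valued function. -/
def edom (u : E → EReal) : Set E := {x | u x < ⊤}

/-- `u` has Lipschitz constant `L` on the interior of its domain. -/
def LipBound (u : E → EReal) (L : ℝ) : Prop :=
  ∀ x ∈ interior (edom u), ∀ y ∈ interior (edom u),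
    |(u x).toReal - (u y).toReal| ≤ L * ‖x - y‖

/-- Membership in `LC`: proper, lower semicontinuous, convex, compact domain,
Lipschitz on the interior of the domain. -/
def IsLC (u : E → EReal) : Prop :=
  (∀ x y : E, ∀ t : ℝ, 0 < t → t < 1 →
      u (t • x + (1 - t) • y) ≤ (t : EReal) * u x + ((1 - t : ℝ) : EReal) * u y) ∧
  LowerSemicontinuous u ∧
  (∀ x, u x ≠ ⊥) ∧
  (∃ x, u x ≠ ⊤) ∧
  IsCompact (edom u) ∧
  (∃ L : ℝ, 0 < L ∧ LipBound u L)

/-- τ-convergence: epi-convergence together with uniformly bounded Lipschitz constants. -/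
def TauConv (uk : ℕ → E → EReal) (u : E → EReal) : Prop :=
  (∀ k, IsLC (uk k)) ∧ IsLC u ∧
  (∀ (x : E) (xk : ℕ → E), Tendsto xk atTop (𝓝 x) →
      u x ≤ liminf (fun k => uk k (xk k)) atTop) ∧
  (∀ x : E, ∃ xk : ℕ → E, Tendsto xk atTop (𝓝 x) ∧
      Tendsto (fun k => uk k (xk k)) atTop (𝓝 (u x))) ∧
  (∃ M : ℝ, 0 < M ∧ ∀ k, LipBound (uk k) M)

/-- Valuation property on `LC`. -/
def IsVal (Z : (E → EReal) → ℝ) : Prop :=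
  ∀ u v : E → EReal, IsLC u → IsLC v → IsLC (fun x => min (u x) (v x)) →
    Z (fun x => min (u x) (v x)) + Z (fun x => max (u x) (v x)) = Z u + Z v

/-- τ-upper semicontinuity. -/
def TauUSC (Z : (E → EReal) → ℝ) : Prop :=
  ∀ (uk : ℕ → E → EReal) (u : E → EReal), TauConv uk u →
    limsup (fun k => Z (uk k)) atTop ≤ Z u

/-- τ-continuity. -/
def TauCont (Z : (E → EReal) → ℝ) : Prop :=
  ∀ (uk : ℕ → E → EReal) (u : E → EReal), TauConv uk u →
    Tendsto (fun k => Z (uk k)) atTop (𝓝 (Z u))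

/-- Translation invariance. -/
def TransInv (Z : (E → EReal) → ℝ) : Prop :=
  ∀ u : E → EReal, IsLC u → ∀ y : E, Z (fun x => u (x - y)) = Z u

/-- Dual epi-translation invariance. -/
def DualTransInv (Z : (E → EReal) → ℝ) : Prop :=
  ∀ u : E → EReal, IsLC u → ∀ (l : E →ₗ[ℝ] ℝ) (c : ℝ),
    Z (fun x => u x + ((l x + c : ℝ) : EReal)) = Z u

/-- SL_n invariance. -/
def SLInv (Z : (E → EReal) → ℝ) : Prop :=
  ∀ u : E → EReal, IsLC u → ∀ φ : E →ₗ[ℝ] E, LinearMap.det φ = 1 →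
    Z (fun x => u (φ x)) = Z u

/-- The class `Conc`. -/
def IsConc (ζ : ℝ → ℝ) : Prop :=
  (∀ t ∈ Set.Ici (0 : ℝ), 0 ≤ ζ t) ∧ ConcaveOn ℝ (Set.Ici 0) ζ ∧
  Tendsto ζ (𝓝[>] 0) (𝓝 0) ∧
  Tendsto (fun t => ζ t / t) atTop (𝓝 0)

open Classical in
/-- `(∞-valued) indicator function` of a set. -/
noncomputable def eIndicator (K : Set E) : E → EReal := fun x =>
  if x ∈ K then (0 : EReal) else ⊤

/-- Real part of an extended-real-valued function. -/
def toRealFn (u : E → EReal) : E → ℝ := fun x => (u x).toReal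

open Classical in
/-- Second derivative of `u`, set to `0` where `u` is not twice differentiable. -/
noncomputable def secondDeriv (u : ℝ → EReal) : ℝ → ℝ := fun x =>
  if DifferentiableAt ℝ (toRealFn u) x ∧ DifferentiableAt ℝ (deriv (toRealFn u)) x
  then deriv (deriv (toRealFn u)) x
  else 0

/-!
Every `u ∈ LC(ℝ)` is `g + I_[a,b]` for a convex Lipschitz function `g : ℝ → ℝ`, and `g` is the
increasing limit of maxima of finitely many affine functions whose slopes are bounded by the
Lipschitz constant of `g`. Such a maximum is affine on each piece of a finite partition of `[a,b]`,
so `Z` vanishes on its restriction to `[a,b]`: dual epi-translation invariance reduces affine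
functions to indicator functions, and the valuation property adds up the pieces. The slope bound
makes the restricted maxima τ-converge to `u`, and upper semicontinuity gives `0 ≤ Z u`.
-/

open Set
open scoped NNReal

section PaschHausdorff

variable {X : Type*} [PseudoMetricSpace X] {C : ℝ≥0}

/-- The Pasch–Hausdorff envelope of `f` on `K`, used to extend a convex `C`-Lipschitz function on
`K` to a convex `C`-Lipschitz function on the whole space. -/
def paschHausdorff (C : ℝ≥0) (K : Set X) (f : X → ℝ) (x : X) : ℝ :=
  ⨅ y : K, (f y + C * dist x y)

variable {K : Set X} {f : X → ℝ}

lemma paschHausdorff_le (hf : LipschitzOnWith C f K) {y : X} (hy : y ∈ K) (x : X) :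
    paschHausdorff C K f x ≤ f y + C * dist x y := by
  refine ciInf_le (f := fun y : K => f y + C * dist x y) ⟨f y - C * dist x y, ?_⟩ ⟨y, hy⟩
  rintro _ ⟨z, rfl⟩
  have hyz := hf.le_add_mul hy z.2
  have htri : (C : ℝ) * dist y z ≤ C * (dist x y + dist x z) := by
    gcongr
    exact dist_triangle_left _ _ _
  linarith

lemma eqOn_paschHausdorff (hf : LipschitzOnWith C f K) : EqOn (paschHausdorff C K f) f K := by
  intro x hx
  have : Nonempty K := ⟨⟨x, hx⟩⟩
  refine le_antisymm ?_ (le_ciInf fun y => hf.le_add_mul hx y.2)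
  simpa only [dist_self, mul_zero, add_zero] using paschHausdorff_le hf hx x

lemma lipschitzWith_paschHausdorff (hK : K.Nonempty) (hf : LipschitzOnWith C f K) :
    LipschitzWith C (paschHausdorff C K f) := by
  have := hK.to_subtype
  refine LipschitzWith.of_le_add_mul C fun x y => ?_
  rw [← sub_le_iff_le_add]
  refine le_ciInf fun z => ?_
  have hxz := paschHausdorff_le hf z.2 x
  have htri : (C : ℝ) * dist x z ≤ C * (dist x y + dist y z) := by
    gcongr
    exact dist_triangle _ _ _
  linarith

lemma convexOn_paschHausdorff {K : Set E} {f : E → ℝ} (hK : K.Nonempty) (hf : LipschitzOnWith C f K)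
    (hconv : ConvexOn ℝ K f) : ConvexOn ℝ univ (paschHausdorff C K f) := by
  have := hK.to_subtype
  refine ⟨convex_univ, fun x _ y _ p q hp hq hpq => ?_⟩
  simp only [paschHausdorff, smul_eq_mul, Real.mul_iInf_of_nonneg hp, Real.mul_iInf_of_nonneg hq]
  refine le_ciInf_add_ciInf fun v w => ?_
  have hdist : dist (p • x + q • y) (p • (v : E) + q • (w : E)) ≤ p * dist x v + q * dist y w := by
    refine (dist_add_add_le _ _ _ _).trans_eq ?_
    rw [dist_smul₀, dist_smul₀, Real.norm_of_nonneg hp, Real.norm_of_nonneg hq]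
  calc paschHausdorff C K f (p • x + q • y)
      ≤ f (p • (v : E) + q • (w : E)) + C * dist (p • x + q • y) (p • (v : E) + q • (w : E)) :=
        paschHausdorff_le hf (hconv.1 v.2 w.2 hp hq hpq) _
    _ ≤ (p * f v + q * f w) + C * (p * dist x v + q * dist y w) := by
        gcongr
        exact hconv.2 v.2 w.2 hp hq hpq
    _ = p * (f v + C * dist x v) + q * (f w + C * dist y w) := by ring

end PaschHausdorff

lemma eqOn_of_eqOn_interior {F : Type*} [AddCommGroup F] [Module ℝ F] [TopologicalSpace F]
    [IsTopologicalAddGroup F] [ContinuousSMul ℝ F] {K : Set F} {f g : F → ℝ}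
    (hint : (interior K).Nonempty) (hconv : ConvexOn ℝ K f) (hlsc : LowerSemicontinuousOn f K)
    (hg : ContinuousOn g K) (hfg : EqOn f g (interior K)) : EqOn f g K := by
  obtain ⟨y, hy⟩ := hint
  intro x hx
  have hmem : ∀ t ∈ Ioc (0 : ℝ) 1, (1 - t) • x + t • y ∈ interior K := fun t ht =>
    hconv.1.combo_self_interior_mem_interior hx hy (sub_nonneg.2 ht.2) ht.1 (sub_add_cancel 1 t)
  have hIoc : ∀ᶠ t in 𝓝[>] (0 : ℝ), t ∈ Ioc (0 : ℝ) 1 := Ioc_mem_nhdsGT one_pos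
  have hpath : Tendsto (fun t : ℝ => (1 - t) • x + t • y) (𝓝[>] 0) (𝓝[K] x) :=
    tendsto_nhdsWithin_iff.2
      ⟨tendsto_nhdsWithin_of_tendsto_nhds (Continuous.tendsto' (by fun_prop) _ _ (by simp)),
        hIoc.mono fun t ht => interior_subset (hmem t ht)⟩
  have hlim := (hg x hx).tendsto.comp hpath
  -- Along the segment from `x` to `y`, lower semicontinuity of `f` bounds the limit of `f = g` from
  -- below by `f x`, and convexity bounds it from above by `f x`.
  apply le_antisymm
  · refine le_of_forall_lt_imp_le_of_dense fun m hm => ge_of_tendsto hlim ?_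
    filter_upwards [hIoc, hpath.eventually (hlsc x hx m hm)] with t ht hmt
    exact hmt.le.trans_eq (hfg (hmem t ht))
  · have hchord : Tendsto (fun t : ℝ => (1 - t) * f x + t * f y) (𝓝[>] 0) (𝓝 (f x)) :=
      tendsto_nhdsWithin_of_tendsto_nhds (Continuous.tendsto' (by fun_prop) _ _ (by simp))
    refine le_of_tendsto_of_tendsto hlim hchord (hIoc.mono fun t ht => ?_)
    rw [Function.comp_apply, ← hfg (hmem t ht)]
    exact hconv.2 hx (interior_subset hy) (sub_nonneg.2 ht.2) ht.1.le (sub_add_cancel 1 t)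

section AffineApproximation

variable {C : ℝ≥0} {g : E → ℝ}

lemma convex_setOf_le_affine (hconv : ConvexOn ℝ univ g) (l : E →ₗ[ℝ] ℝ) (c : ℝ) :
    Convex ℝ {x | g x ≤ l x + c} := by
  have hdiff : ConvexOn ℝ univ (g - ⇑l) := hconv.sub (l.concaveOn convex_univ)
  simpa only [mem_univ, true_and, Pi.sub_apply, sub_le_iff_le_add'] using hdiff.convex_le c

lemma norm_le_of_affine_le_lipschitz {l : StrongDual ℝ E} {c : ℝ} (hg : LipschitzWith C g)
    (hle : ∀ x, l x + c ≤ g x) : ‖l‖ ≤ C := by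
  have hbound : ∀ x, l x ≤ C * ‖x‖ := fun x => by
    by_contra! hlt
    obtain ⟨n, hn⟩ := exists_nat_gt ((g 0 - c) / (l x - C * ‖x‖))
    rw [div_lt_iff₀ (sub_pos.2 hlt)] at hn
    have hgn := hg.le_add_mul ((n : ℝ) • x) 0
    have hln := hle ((n : ℝ) • x)
    rw [dist_zero_right, norm_smul, Real.norm_natCast] at hgn
    rw [map_smul, smul_eq_mul] at hln
    linarith
  refine l.opNorm_le_bound C.2 fun x => abs_le'.2 ⟨hbound x, ?_⟩
  simpa only [map_neg, norm_neg] using hbound (-x)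

lemma exists_tendsto_partialSups_affine [HereditarilyLindelofSpace E] (hg : LipschitzWith C g)
    (hconv : ConvexOn ℝ univ g) :
    ∃ (l : ℕ → StrongDual ℝ E) (c : ℕ → ℝ), (∀ i, ‖l i‖ ≤ C) ∧
      ∀ x, Tendsto (fun n => partialSups (fun i x => l i x + c i) n x) atTop (𝓝 (g x)) := by
  obtain ⟨l, c, hle, hsup⟩ :=
    hconv.real_univ_sSup_of_nat_affine_eq hg.continuous.lowerSemicontinuous
  refine ⟨l, c, fun i => norm_le_of_affine_le_lipschitz hg (hle i), fun x => ?_⟩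
  have hbdd : BddAbove (range fun i => l i x + c i) := ⟨g x, forall_mem_range.2 fun i => hle i x⟩
  have hgx : g x = ⨆ n, partialSups (fun i => l i x + c i) n := by
    rw [ciSup_partialSups_eq hbdd, ← hsup, iSup_apply]
    rfl
  simp only [Pi.partialSups_apply, hgx]
  exact tendsto_atTop_ciSup (partialSups_monotone _) (bddAbove_range_partialSups.2 hbdd)

end AffineApproximation

section AddIndicator

variable {X : Type*} {C : ℝ≥0} {K K' : Set X} {f g : X → ℝ} {x : X}

/-- The function `g + I_K`, equal to `g` on `K` and to `+∞` off `K`. Every function in `LC(ℝ)` has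
this form with `g` convex and Lipschitz on `ℝ` and `K` a compact interval. -/
def addIndicator (g : X → ℝ) (K : Set X) : X → EReal := fun x => eIndicator K x + (g x : EReal)

lemma addIndicator_of_mem (hx : x ∈ K) : addIndicator g K x = g x := by
  simp only [addIndicator, eIndicator, if_pos hx, zero_add]

lemma addIndicator_of_notMem (hx : x ∉ K) : addIndicator g K x = ⊤ := by
  simp only [addIndicator, eIndicator, if_neg hx, EReal.top_add_coe]

lemma coe_le_addIndicator (g : X → ℝ) (K : Set X) (x : X) : (g x : EReal) ≤ addIndicator g K x := by
  by_cases hx : x ∈ K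
  · exact (addIndicator_of_mem hx).ge
  · exact le_top.trans_eq (addIndicator_of_notMem hx).symm

lemma addIndicator_ne_bot : addIndicator g K x ≠ ⊥ :=
  ne_bot_of_le_ne_bot (EReal.coe_ne_bot _) (coe_le_addIndicator g K x)

lemma addIndicator_zero (K : Set X) : addIndicator 0 K = eIndicator K := by
  ext x
  simp only [addIndicator, Pi.zero_apply, EReal.coe_zero, add_zero]

lemma addIndicator_congr (h : EqOn f g K) : addIndicator f K = addIndicator g K := by
  ext x
  by_cases hx : x ∈ K
  · rw [addIndicator_of_mem hx, addIndicator_of_mem hx, h hx]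
  · rw [addIndicator_of_notMem hx, addIndicator_of_notMem hx]

lemma coe_mul_addIndicator {t : ℝ} (ht : 0 < t) :
    (t : EReal) * addIndicator g K x = addIndicator (t • g) K x := by
  by_cases hx : x ∈ K
  · rw [addIndicator_of_mem hx, addIndicator_of_mem hx, ← EReal.coe_mul, Pi.smul_apply, smul_eq_mul]
  · rw [addIndicator_of_notMem hx, addIndicator_of_notMem hx, EReal.coe_mul_top_of_pos ht]

lemma min_addIndicator :
    (fun x => min (addIndicator g K x) (addIndicator g K' x)) = addIndicator g (K ∪ K') := by
  ext x
  by_cases hx : x ∈ K <;> by_cases hx' : x ∈ K' <;>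
    simp [addIndicator, eIndicator, hx, hx']

lemma max_addIndicator :
    (fun x => max (addIndicator g K x) (addIndicator g K' x)) = addIndicator g (K ∩ K') := by
  ext x
  by_cases hx : x ∈ K <;> by_cases hx' : x ∈ K' <;>
    simp [addIndicator, eIndicator, hx, hx']

lemma edom_addIndicator (g : X → ℝ) (K : Set X) : edom (addIndicator g K) = K := by
  ext x
  by_cases hx : x ∈ K
  · simp [edom, addIndicator_of_mem hx, hx]
  · simp [edom, addIndicator_of_notMem hx, hx]

lemma lowerSemicontinuous_addIndicator [TopologicalSpace X] (hK : IsClosed K)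
    (hg : ContinuousOn g K) : LowerSemicontinuous (addIndicator g K) := by
  intro x m hm
  by_cases hx : x ∈ K
  · rw [addIndicator_of_mem hx] at hm
    have hgK : ∀ᶠ z in 𝓝[K] x, m < (g z : EReal) :=
      ((continuous_coe_real_ereal.tendsto _).comp (hg x hx)).eventually (lt_mem_nhds hm)
    filter_upwards [eventually_nhdsWithin_iff.1 hgK] with z hz
    by_cases hzK : z ∈ K
    · exact addIndicator_of_mem hzK ▸ hz hzK
    · exact addIndicator_of_notMem hzK ▸ hm.trans_le le_top
  · filter_upwards [hK.isOpen_compl.mem_nhds hx] with z hz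
    rwa [addIndicator_of_notMem hz, ← addIndicator_of_notMem hx]

end AddIndicator

-- `IsLC` and `TauConv` ask for a positive Lipschitz constant, hence `C + 1`.
lemma lipBound_addIndicator {F : Type*} [NormedAddCommGroup F] {C : ℝ≥0} {K : Set F} {g : F → ℝ}
    (hg : LipschitzOnWith C g K) : LipBound (addIndicator g K) (C + 1) := by
  intro x hx y hy
  rw [edom_addIndicator] at hx hy
  rw [addIndicator_of_mem (interior_subset hx), addIndicator_of_mem (interior_subset hy),
    EReal.toReal_coe, EReal.toReal_coe, ← Real.dist_eq, ← dist_eq_norm]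
  refine (hg.dist_le_mul x (interior_subset hx) y (interior_subset hy)).trans ?_
  gcongr
  exact le_add_of_nonneg_right zero_le_one

section LC

variable {C : ℝ≥0} {K : Set E} {g : E → ℝ}

lemma isLC_addIndicator (hK : IsCompact K) (hne : K.Nonempty) (hg : LipschitzOnWith C g K)
    (hconv : ConvexOn ℝ K g) : IsLC (addIndicator g K) := by
  refine ⟨fun x y t ht ht1 => ?_, lowerSemicontinuous_addIndicator hK.isClosed hg.continuousOn,
    fun _ => addIndicator_ne_bot, ?_, (edom_addIndicator g K).symm ▸ hK,
    C + 1, by positivity, lipBound_addIndicator hg⟩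
  · rw [coe_mul_addIndicator ht, coe_mul_addIndicator (sub_pos.2 ht1)]
    by_cases hx : x ∈ K
    · by_cases hy : y ∈ K
      · have hxy : t • x + (1 - t) • y ∈ K :=
          hconv.1 hx hy ht.le (sub_nonneg.2 ht1.le) (add_sub_cancel t 1)
        rw [addIndicator_of_mem hx, addIndicator_of_mem hy, addIndicator_of_mem hxy]
        exact_mod_cast hconv.2 hx hy ht.le (sub_nonneg.2 ht1.le) (add_sub_cancel t 1)
      · rw [addIndicator_of_notMem hy, EReal.add_top_of_ne_bot addIndicator_ne_bot]
        exact le_top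
    · rw [addIndicator_of_notMem hx, EReal.top_add_of_ne_bot addIndicator_ne_bot]
      exact le_top
  · obtain ⟨x, hx⟩ := hne
    exact ⟨x, addIndicator_of_mem hx ▸ EReal.coe_ne_top _⟩

lemma isLC_eIndicator (hK : IsCompact K) (hne : K.Nonempty) (hconv : Convex ℝ K) :
    IsLC (eIndicator K) :=
  addIndicator_zero K ▸ isLC_addIndicator hK hne (LipschitzWith.const (0 : ℝ)).lipschitzOnWith
    (convexOn_const 0 hconv)

lemma tauConv_addIndicator {G : ℕ → E → ℝ} (hLC : ∀ n, IsLC (addIndicator (G n) K))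
    (hLC' : IsLC (addIndicator g K)) (hG : ∀ n, LipschitzOnWith C (G n) K)
    (hlim : ∀ x ∈ K, Tendsto (fun n => G n x) atTop (𝓝 (g x))) :
    TauConv (fun n => addIndicator (G n) K) (addIndicator g K) := by
  have hK : IsClosed K := edom_addIndicator g K ▸ hLC'.2.2.2.2.1.isClosed
  refine ⟨hLC, hLC', fun x xk hxk => ?_, fun x => ⟨fun _ => x, tendsto_const_nhds, ?_⟩,
    C + 1, by positivity, fun n => lipBound_addIndicator (hG n)⟩
  · by_cases hx : x ∈ K
    · have hlow : Tendsto (fun n => ((G n x - C * dist x (xk n) : ℝ) : EReal)) atTop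
          (𝓝 (g x)) := by
        refine (continuous_coe_real_ereal.tendsto _).comp ?_
        have hdist : Tendsto (fun n => dist x (xk n)) atTop (𝓝 0) := by
          simpa only [dist_self] using (tendsto_const_nhds (x := x)).dist hxk
        simpa only [mul_zero, sub_zero] using (hlim x hx).sub (hdist.const_mul (C : ℝ))
      rw [addIndicator_of_mem hx, ← hlow.liminf_eq]
      refine liminf_le_liminf (Eventually.of_forall fun n => ?_)
      by_cases hn : xk n ∈ K
      · beta_reduce
        rw [addIndicator_of_mem hn, EReal.coe_le_coe_iff, sub_le_iff_le_add]
        exact (hG n).le_add_mul hx hn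
      · exact le_top.trans_eq (addIndicator_of_notMem hn).symm
    · have htop : ∀ᶠ n in atTop, addIndicator (G n) K (xk n) = ⊤ :=
        (hxk.eventually (hK.isOpen_compl.mem_nhds hx)).mono fun n => addIndicator_of_notMem
      rw [liminf_congr htop, liminf_const]
      exact le_top
  · by_cases hx : x ∈ K
    · simp only [addIndicator_of_mem hx]
      exact (continuous_coe_real_ereal.tendsto _).comp (hlim x hx)
    · simp only [addIndicator_of_notMem hx]
      exact tendsto_const_nhds

end LC

namespace IsLC

variable {u : E → EReal}

lemma nonempty_edom (hu : IsLC u) : (edom u).Nonempty :=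
  hu.2.2.2.1.imp fun _ => lt_top_iff_ne_top.2

lemma isCompact_edom (hu : IsLC u) : IsCompact (edom u) :=
  hu.2.2.2.2.1

lemma coe_toRealFn (hu : IsLC u) {x : E} (hx : x ∈ edom u) : (toRealFn u x : EReal) = u x :=
  EReal.coe_toReal hx.ne (hu.2.2.1 x)

lemma le_coe_combo (hu : IsLC u) {x y : E} (hx : x ∈ edom u) (hy : y ∈ edom u) {p q : ℝ}
    (hp : 0 < p) (hq : 0 < q) (hpq : p + q = 1) :
    u (p • x + q • y) ≤ ((p * toRealFn u x + q * toRealFn u y : ℝ) : EReal) := by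
  obtain rfl : q = 1 - p := eq_sub_of_add_eq' hpq
  have h := hu.1 x y p hp (sub_pos.1 hq)
  rw [← hu.coe_toRealFn hx, ← hu.coe_toRealFn hy] at h
  exact_mod_cast h

lemma convex_edom (hu : IsLC u) : Convex ℝ (edom u) :=
  convex_iff_forall_pos.2 fun _ hx _ hy _ _ hp hq hpq =>
    (hu.le_coe_combo hx hy hp hq hpq).trans_lt (EReal.coe_lt_top _)

lemma convexOn_toRealFn (hu : IsLC u) : ConvexOn ℝ (edom u) (toRealFn u) := by
  refine convexOn_iff_forall_pos.2 ⟨hu.convex_edom, fun x hx y hy p q hp hq hpq => ?_⟩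
  have h := hu.le_coe_combo hx hy hp hq hpq
  rw [← hu.coe_toRealFn (hu.convex_edom hx hy hp.le hq.le hpq)] at h
  exact_mod_cast h

lemma lowerSemicontinuousOn_toRealFn (hu : IsLC u) :
    LowerSemicontinuousOn (toRealFn u) (edom u) := by
  intro x hx m hm
  have hmu : (m : EReal) < u x := hu.coe_toRealFn hx ▸ EReal.coe_lt_coe_iff.2 hm
  filter_upwards [nhdsWithin_le_nhds (hu.2.1 x m hmu), self_mem_nhdsWithin] with z hz hzK
  exact EReal.coe_lt_coe_iff.1 (hu.coe_toRealFn hzK ▸ hz)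

lemma exists_lipschitzOnWith_toRealFn (hu : IsLC u) :
    ∃ C, LipschitzOnWith C (toRealFn u) (interior (edom u)) := by
  obtain ⟨L, hL, hlip⟩ := hu.2.2.2.2.2
  refine ⟨⟨L, hL.le⟩, LipschitzOnWith.of_dist_le_mul fun x hx y hy => ?_⟩
  rw [Real.dist_eq, dist_eq_norm]
  exact hlip x hx y hy

lemma addIndicator_edom (hu : IsLC u) {g : E → ℝ} (hg : EqOn g (toRealFn u) (edom u)) :
    addIndicator g (edom u) = u := by
  ext x
  by_cases hx : x ∈ edom u
  · rw [addIndicator_of_mem hx, hg hx, hu.coe_toRealFn hx]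
  · exact (addIndicator_of_notMem hx).trans (not_lt_top_iff.1 hx).symm

lemma exists_lipschitz_convex_addIndicator_edom_eq (hu : IsLC u)
    (hint : (interior (edom u)).Nonempty) :
    ∃ (C : ℝ≥0) (g : E → ℝ), LipschitzWith C g ∧ ConvexOn ℝ univ g ∧
      addIndicator g (edom u) = u := by
  obtain ⟨C, hC⟩ := hu.exists_lipschitzOnWith_toRealFn
  have hconv := hu.convexOn_toRealFn.subset interior_subset hu.convex_edom.interior
  have hlip := lipschitzWith_paschHausdorff hint hC
  have heq := eqOn_of_eqOn_interior hint hu.convexOn_toRealFn hu.lowerSemicontinuousOn_toRealFn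
    hlip.continuous.continuousOn (eqOn_paschHausdorff hC).symm
  exact ⟨C, _, hlip, convexOn_paschHausdorff hint hC hconv, hu.addIndicator_edom heq.symm⟩

lemma exists_edom_eq_Icc {u : ℝ → EReal} (hu : IsLC u) : ∃ a b, a ≤ b ∧ edom u = Icc a b := by
  have hIcc := eq_Icc_of_connected_compact ⟨hu.nonempty_edom, hu.convex_edom.isPreconnected⟩
    hu.isCompact_edom
  exact ⟨_, _, nonempty_Icc.1 (hIcc ▸ hu.nonempty_edom), hIcc⟩

lemma exists_lipschitz_convex_addIndicator_Icc_eq {u : ℝ → EReal} (hu : IsLC u) :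
    ∃ (C : ℝ≥0) (g : ℝ → ℝ) (a b : ℝ), LipschitzWith C g ∧ ConvexOn ℝ univ g ∧ a ≤ b ∧
      addIndicator g (Icc a b) = u := by
  obtain ⟨a, b, hab, hdom⟩ := hu.exists_edom_eq_Icc
  rcases hab.eq_or_lt with rfl | hlt
  · have hconst : EqOn (fun _ => toRealFn u a) (toRealFn u) (edom u) := by
      rw [hdom, Icc_self]
      rintro _ rfl
      rfl
    exact ⟨0, _, a, a, LipschitzWith.const _, convexOn_const _ convex_univ, hab,
      hdom ▸ hu.addIndicator_edom hconst⟩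
  · obtain ⟨C, g, hlip, hconv, hgu⟩ := hu.exists_lipschitz_convex_addIndicator_edom_eq
      (by rw [hdom, interior_Icc]; exact nonempty_Ioo.2 hlt)
    exact ⟨C, g, a, b, hlip, hconv, hab, hdom ▸ hgu⟩

end IsLC

lemma IsVal.addIndicator_union_add_inter {Z : (E → EReal) → ℝ} (hval : IsVal Z) {C : ℝ≥0}
    {g : E → ℝ} (hg : LipschitzWith C g) (hconv : ConvexOn ℝ univ g) {K K' : Set E}
    (hK : IsCompact K) (hK' : IsCompact K') (hne : K.Nonempty) (hne' : K'.Nonempty)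
    (hcK : Convex ℝ K) (hcK' : Convex ℝ K') (hunion : Convex ℝ (K ∪ K')) :
    Z (addIndicator g (K ∪ K')) + Z (addIndicator g (K ∩ K')) =
      Z (addIndicator g K) + Z (addIndicator g K') := by
  have hLC : ∀ {S : Set E}, IsCompact S → S.Nonempty → Convex ℝ S → IsLC (addIndicator g S) :=
    fun hS hSne hSc =>
      isLC_addIndicator hS hSne hg.lipschitzOnWith (hconv.subset (subset_univ _) hSc)
  rw [← min_addIndicator, ← max_addIndicator]
  refine hval _ _ (hLC hK hne hcK) (hLC hK' hne' hcK') ?_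
  rw [min_addIndicator]
  exact hLC (hK.union hK') hne.inl hunion

/-- Convex `C`-Lipschitz functions `g` on `ℝ` such that `Z` vanishes on the restriction of `g` to
every compact interval. Bundling convexity and the Lipschitz bound makes the class closed under the
maxima of `IsNegligible.sup`. -/
structure IsNegligible (Z : (ℝ → EReal) → ℝ) (C : ℝ≥0) (g : ℝ → ℝ) : Prop where
  lipschitz : LipschitzWith C g
  convexOn : ConvexOn ℝ univ g
  eq_zero : ∀ a b, a ≤ b → Z (addIndicator g (Icc a b)) = 0

section Valuation

variable {Z : (ℝ → EReal) → ℝ} {C : ℝ≥0} {g h m : ℝ → ℝ} {a b p : ℝ}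

lemma IsVal.addIndicator_Icc_add_Icc (hval : IsVal Z) (hg : LipschitzWith C g)
    (hconv : ConvexOn ℝ univ g) (hp : Z (addIndicator g (Icc p p)) = 0) (hap : a ≤ p)
    (hpb : p ≤ b) :
    Z (addIndicator g (Icc a b)) =
      Z (addIndicator g (Icc a p)) + Z (addIndicator g (Icc p b)) := by
  have hunion : Icc a p ∪ Icc p b = Icc a b := Icc_union_Icc_eq_Icc hap hpb
  have hinter : Icc a p ∩ Icc p b = Icc p p := by
    rw [Icc_inter_Icc, sup_eq_right.2 hap, inf_eq_left.2 hpb]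
  have hadd := hval.addIndicator_union_add_inter hg hconv isCompact_Icc isCompact_Icc
    (nonempty_Icc.2 hap) (nonempty_Icc.2 hpb) (convex_Icc a p) (convex_Icc p b)
    (hunion ▸ convex_Icc a b)
  rwa [hunion, hinter, hp, add_zero] at hadd

lemma IsNegligible.eq_zero_of_eqOn_Ioo (hg : IsNegligible Z C g) (hm : Continuous m)
    (hpoint : ∀ x, Z (addIndicator m (Icc x x)) = 0) (hab : a ≤ b) (hmg : EqOn m g (Ioo a b)) :
    Z (addIndicator m (Icc a b)) = 0 := by
  rcases hab.eq_or_lt with rfl | hlt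
  · exact hpoint a
  · have hIcc : EqOn m g (Icc a b) :=
      closure_Ioo hlt.ne ▸ hmg.closure hm hg.lipschitz.continuous
    rw [addIndicator_congr hIcc, hg.eq_zero a b hab]

/-- On a compact interval, `g ⊔ h` equals `h` on the (possibly empty) interval `{g ≤ h}` and `g` on
the remaining pieces. -/
lemma IsNegligible.sup (hval : IsVal Z) (hg : IsNegligible Z C g) (hh : IsNegligible Z C h)
    (hord : OrdConnected {x | g x ≤ h x}) : IsNegligible Z C (g ⊔ h) := by
  have hlip : LipschitzWith C (g ⊔ h) :=
    max_self C ▸ hg.lipschitz.max hh.lipschitz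
  have hconv : ConvexOn ℝ univ (g ⊔ h) := hg.convexOn.sup hh.convexOn
  have hpoint : ∀ x, Z (addIndicator (g ⊔ h) (Icc x x)) = 0 := fun x => by
    rcases le_total (g x) (h x) with hgh | hhg
    · rw [addIndicator_congr (g := h) (by simpa [EqOn]), hh.eq_zero x x le_rfl]
    · rw [addIndicator_congr (g := g) (by simpa [EqOn]), hg.eq_zero x x le_rfl]
  refine ⟨hlip, hconv, fun a b hab => ?_⟩
  have heq_g : ∀ {c d}, a ≤ c → c ≤ d → d ≤ b → (∀ x ∈ Ioo c d, x ∉ Icc a b ∩ {x | g x ≤ h x}) →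
      Z (addIndicator (g ⊔ h) (Icc c d)) = 0 := fun hac hcd hdb hnot =>
    hg.eq_zero_of_eqOn_Ioo hlip.continuous hpoint hcd fun x hx =>
      sup_eq_left.2 (not_le.1 fun hle =>
        hnot x hx ⟨⟨hac.trans hx.1.le, hx.2.le.trans hdb⟩, hle⟩).le
  have hcomp : IsCompact (Icc a b ∩ {x | g x ≤ h x}) :=
    isCompact_Icc.inter_right (isClosed_le hg.lipschitz.continuous hh.lipschitz.continuous)
  rcases (Icc a b ∩ {x | g x ≤ h x}).eq_empty_or_nonempty with hempty | hne
  · exact heq_g le_rfl hab le_rfl fun x _ => hempty ▸ notMem_empty x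
  obtain ⟨p, ⟨⟨hap, hpb⟩, hp⟩, hleast⟩ := hcomp.exists_isLeast hne
  obtain ⟨q, ⟨⟨haq, hqb⟩, hq⟩, hgreatest⟩ := hcomp.exists_isGreatest hne
  have hpq : p ≤ q := hleast ⟨⟨haq, hqb⟩, hq⟩
  have hmid : Z (addIndicator (g ⊔ h) (Icc p q)) = 0 :=
    hh.eq_zero_of_eqOn_Ioo hlip.continuous hpoint hpq fun x hx =>
      sup_eq_right.2 (hord.out hp hq (Ioo_subset_Icc_self hx))
  have hleft : Z (addIndicator (g ⊔ h) (Icc a p)) = 0 :=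
    heq_g le_rfl hap hpb fun x hx hxS => (hleast hxS).not_gt hx.2
  have hright : Z (addIndicator (g ⊔ h) (Icc q b)) = 0 :=
    heq_g haq hqb le_rfl fun x hx hxS => (hgreatest hxS).not_gt hx.1
  rw [hval.addIndicator_Icc_add_Icc hlip hconv (hpoint p) hap hpb,
    hval.addIndicator_Icc_add_Icc hlip hconv (hpoint q) hpq hqb, hleft, hmid, hright]
  simp

lemma isNegligible_affine {l : StrongDual ℝ ℝ} {c : ℝ} (hl : ‖l‖ ≤ C)
    (hzero : ∀ a b, a ≤ b → Z (addIndicator (fun x => l x + c) (Icc a b)) = 0) :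
    IsNegligible Z C fun x => l x + c where
  lipschitz := by
    simpa only [add_zero] using
      (l.lipschitzWith_of_opNorm_le hl).add (LipschitzWith.const c)
  convexOn := (l.toLinearMap.convexOn convex_univ).add_const c
  eq_zero := hzero

lemma IsNegligible.partialSups_affine (hval : IsVal Z) {l : ℕ → StrongDual ℝ ℝ} {c : ℕ → ℝ}
    (haff : ∀ i, IsNegligible Z C fun x => l i x + c i) (n : ℕ) :
    IsNegligible Z C (partialSups (fun i x => l i x + c i) n) := by
  induction n with
  | zero => simpa only [partialSups_zero] using haff 0
  | succ n ih =>
    rw [partialSups_add_one]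
    exact ih.sup hval (haff (n + 1)) (convex_setOf_le_affine ih.convexOn _ _).ordConnected

lemma TauUSC.nonneg_of_negligible (husc : TauUSC Z) {G : ℕ → ℝ → ℝ}
    (hG : ∀ n, IsNegligible Z C (G n)) (hab : a ≤ b) (hg : IsLC (addIndicator g (Icc a b)))
    (hlim : ∀ x ∈ Icc a b, Tendsto (fun n => G n x) atTop (𝓝 (g x))) :
    0 ≤ Z (addIndicator g (Icc a b)) := by
  have hLC : ∀ n, IsLC (addIndicator (G n) (Icc a b)) := fun n =>
    isLC_addIndicator isCompact_Icc (nonempty_Icc.2 hab) (hG n).lipschitz.lipschitzOnWith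
      ((hG n).convexOn.subset (subset_univ _) (convex_Icc a b))
  have hlimsup := husc _ _ <|
    tauConv_addIndicator hLC hg (fun n => (hG n).lipschitz.lipschitzOnWith) hlim
  simpa only [(hG _).eq_zero a b hab, limsup_const] using hlimsup

end Valuation

theorem stmt10_general (Z : (ℝ → EReal) → ℝ) (hval : IsVal Z) (husc : TauUSC Z)
    (haffine : ∀ (l : ℝ →ₗ[ℝ] ℝ) (c a b : ℝ), a ≤ b →
      Z (fun x => eIndicator (Icc a b) x + ((l x + c : ℝ) : EReal)) = 0) :
    ∀ u : ℝ → EReal, IsLC u → 0 ≤ Z u := by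
  intro u hu
  obtain ⟨C, g, a, b, hlip, hconv, hab, rfl⟩ :=
    hu.exists_lipschitz_convex_addIndicator_Icc_eq
  obtain ⟨l, c, hl, hlim⟩ := exists_tendsto_partialSups_affine hlip hconv
  have hmax : ∀ n, IsNegligible Z C (partialSups (fun i x => l i x + c i) n) :=
    IsNegligible.partialSups_affine hval fun i => isNegligible_affine (hl i) (haffine (l i) (c i))
  exact husc.nonneg_of_negligible hmax hab hu fun x _ => hlim x

/-- A simple, τ-upper semicontinuous, translation and dually
epi-translation invariant valuation on `LC(ℝ)` that vanishes on indicator functions of closed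
intervals is non-negative. -/
theorem stmt10 (Z : (ℝ → EReal) → ℝ)
    (hval : IsVal Z) (husc : TauUSC Z) (htrans : TransInv Z) (hdual : DualTransInv Z)
    (hsimple : ∀ u : ℝ → EReal, IsLC u → (∃ x : ℝ, edom u = {x}) → Z u = 0)
    (hvanish : ∀ a b : ℝ, a ≤ b → Z (eIndicator (Set.Icc a b)) = 0) :
    ∀ u : ℝ → EReal, IsLC u → 0 ≤ Z u :=
  stmt10_general Z hval husc fun l c a b hab =>
    (hdual _ (isLC_eIndicator isCompact_Icc (nonempty_Icc.2 hab) (convex_Icc a b)) l c).trans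
      (hvanish a b hab)

end
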